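/- Let A ∈ ℝ^{n×n} be symmetric positive definite, let L ∈ ℝ^{n×n} be invertible, and set X := L L^T. Let C_1, …, C_r be a partition of {1,…,n} into nonempty sets, let S_i ∈ ℝ^{n×|C_i|} be the submatrix of L consisting of the columns indexed by C_i, and let p_i := Tr(S_i^T A S_i)/Tr(L^T A L) (so p_i > 0 and Σ_i p_i = 1). For each i, define the randomized BFGS update X⁺_i := S_i (S_i^T A S_i)^{-1} S_i^T + (I − S_i (S_i^T A S_i)^{-1} S_i^T A) X (I − A S_i (S_i^T A S_i)^{-1} S_i^T). Then Σ_{i=1}^r p_i ‖X⁺_i − A^{-1}‖_{F(A)}² ≤ (1 − λ_min(L^T A L)/Tr(L^T A L)) ‖X − A^{-1}‖_{F(A)}². -/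

import Mathlib

open Matrix BigOperators

lemma aux_spec {m : Type*} [Fintype m] [DecidableEq m] {H : Matrix m m ℝ} (hH : H.IsHermitian) :
    ∃ U : Matrix m m ℝ, U * Uᵀ = 1 ∧ Uᵀ * U = 1 ∧ H = U * diagonal hH.eigenvalues * Uᵀ := by
  refine ⟨(hH.eigenvectorUnitary : Matrix m m ℝ), ?_, ?_, ?_⟩
  · have := Unitary.coe_mul_star_self hH.eigenvectorUnitary
    simpa [star_eq_conjTranspose] using this
  · have := Unitary.coe_star_mul_self hH.eigenvectorUnitary
    simpa [star_eq_conjTranspose] using this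
  · have := hH.spectral_theorem
    rw [Unitary.conjStarAlgAut_apply] at this
    simpa [star_eq_conjTranspose, Function.comp_def] using this

lemma aux_conj {m k : Type*} [Fintype m] [Fintype k] {H : Matrix m m ℝ}
    (hH : H.PosSemidef) (U : Matrix k m ℝ) : (U * H * Uᵀ).PosSemidef := by
  have := hH.mul_mul_conjTranspose_same U
  simpa using this

lemma aux_trace {m : Type*} [Fintype m] [DecidableEq m] {P Q : Matrix m m ℝ}
    (hP : P.PosSemidef) (hQ : Q.PosSemidef) : 0 ≤ (P * Q).trace := by
  obtain ⟨U, h1, h2, h3⟩ := aux_spec hQ.1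
  have h4 : (P * Q).trace = ((Uᵀ * P * Uᵀᵀ) * diagonal hQ.1.eigenvalues).trace := by
    conv_lhs => rw [h3]
    rw [transpose_transpose, ← Matrix.mul_assoc, Matrix.trace_mul_comm]
    simp only [Matrix.mul_assoc]
  rw [h4, Matrix.trace]
  refine Finset.sum_nonneg fun i _ => ?_
  rw [Matrix.diag_apply, Matrix.mul_diagonal]
  exact mul_nonneg (aux_conj hP Uᵀ).diag_nonneg (hQ.eigenvalues_nonneg i)

lemma aux_inv {m : Type*} [Fintype m] [DecidableEq m] {B : Matrix m m ℝ}
    (hB : B.PosDef) : (B.trace • B⁻¹ - 1).PosSemidef := by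
  obtain ⟨U, h1, h2, h3⟩ := aux_spec hB.1
  have ht : B.trace = ∑ i, hB.1.eigenvalues i := by
    simpa using hB.1.trace_eq_sum_eigenvalues
  have hpos := hB.eigenvalues_pos
  have hinv : B⁻¹ = U * diagonal (fun i => (hB.1.eigenvalues i)⁻¹) * Uᵀ := by
    apply Matrix.inv_eq_right_inv
    refine (congrArg (· * (U * diagonal (fun i => (hB.1.eigenvalues i)⁻¹) * Uᵀ)) h3).trans ?_
    calc _ = U * (diagonal hB.1.eigenvalues * (Uᵀ * U) *
          diagonal (fun i => (hB.1.eigenvalues i)⁻¹)) * Uᵀ := by simp only [Matrix.mul_assoc]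
      _ = 1 := by
        rw [h2, Matrix.mul_one, diagonal_mul_diagonal]
        simp [fun i => mul_inv_cancel₀ (hpos i).ne', h1]
  have : B.trace • B⁻¹ - 1 =
      U * diagonal (fun i => B.trace * (hB.1.eigenvalues i)⁻¹ - 1) * Uᵀ := by
    have : diagonal (fun i => B.trace * (hB.1.eigenvalues i)⁻¹ - 1)
        = B.trace • diagonal (fun i => (hB.1.eigenvalues i)⁻¹) - 1 := by
      ext i j
      by_cases h : i = j <;> simp [h, diagonal, Matrix.one_apply]
    rw [this, hinv, Matrix.mul_sub, Matrix.sub_mul, Matrix.mul_one, h1]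
    simp
  rw [this]
  refine aux_conj (PosSemidef.diagonal fun i => ?_) U
  have h5 : hB.1.eigenvalues i ≤ B.trace := by
    rw [ht]
    exact Finset.single_le_sum (fun j _ => (hpos j).le) (Finset.mem_univ i)
  have := (one_le_div (hpos i)).2 h5
  rw [div_eq_mul_inv] at this
  simpa using this

lemma aux_min {m : Type*} [Fintype m] [DecidableEq m] {B : Matrix m m ℝ}
    (hB : B.IsHermitian) : (B - (⨅ j, hB.eigenvalues j) • (1 : Matrix m m ℝ)).PosSemidef := by
  obtain ⟨U, h1, h2, h3⟩ := aux_spec hB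
  generalize hl : (⨅ j, hB.eigenvalues j) = l
  have : B - l • (1 : Matrix m m ℝ) = U * diagonal (fun i => hB.eigenvalues i - l) * Uᵀ := by
    have : diagonal (fun i => hB.eigenvalues i - l) = diagonal hB.eigenvalues - l • 1 := by
      ext i j
      by_cases h : i = j <;> simp [h, diagonal, Matrix.one_apply]
    rw [this, Matrix.mul_sub, Matrix.sub_mul, ← h3]
    simp [h1]
  rw [this]
  refine aux_conj (PosSemidef.diagonal fun i => ?_) U
  have : l ≤ hB.eigenvalues i := hl ▸ ciInf_le (Set.finite_range _).bddBelow i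
  simpa using this

/-- One-step estimate. -/
lemma aux_step {n : Type*} [Fintype n] [DecidableEq n] {A X P : Matrix n n ℝ}
    (hA : A.PosDef) (hX : Xᵀ = X) (hP : P.PosSemidef) (hPAP : P * A * P = P) :
    ((P + (1 - P * A) * X * (1 - A * P) - A⁻¹)ᵀ * A *
      (P + (1 - P * A) * X * (1 - A * P) - A⁻¹) * A).trace ≤
    ((X - A⁻¹)ᵀ * A * (X - A⁻¹) * A).trace
      - (P * (A * (X - A⁻¹) * A * (X - A⁻¹)ᵀ * A)).trace := by
  have hAt : Aᵀ = A := by simpa using hA.1.eq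
  have hPt : Pᵀ = P := by simpa using hP.1.eq
  have hAi : (A⁻¹)ᵀ = A⁻¹ := by rw [transpose_nonsing_inv, hAt]
  have hu : IsUnit A.det := (Matrix.isUnit_iff_isUnit_det A).1 hA.isUnit
  have hAA : A * A⁻¹ = 1 := mul_nonsing_inv A hu
  have hAA' : A⁻¹ * A = 1 := nonsing_inv_mul A hu
  obtain ⟨Y, hY⟩ : ∃ Y, Y = X - A⁻¹ := ⟨_, rfl⟩
  have hYt : Yᵀ = Y := by rw [hY, transpose_sub, hX, hAi]
  have hE : P + (1 - P * A) * X * (1 - A * P) - A⁻¹ = (1 - P * A) * Y * (1 - A * P) := by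
    have e1 : (1 - P * A) * A⁻¹ * (1 - A * P) = A⁻¹ - P := by
      have : (1 - P * A) * A⁻¹ = A⁻¹ - P := by
        rw [Matrix.sub_mul, Matrix.mul_assoc, hAA]; simp
      rw [this, Matrix.mul_sub, ← Matrix.mul_assoc, Matrix.sub_mul, Matrix.sub_mul,
        hAA', Matrix.sub_mul, hPAP]
      simp
    have e2 : (1 - P * A) * (X - A⁻¹) * (1 - A * P) =
        (1 - P * A) * X * (1 - A * P) - (1 - P * A) * A⁻¹ * (1 - A * P) := by
      rw [← Matrix.sub_mul, ← Matrix.mul_sub]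
    rw [hY, e2, e1]
    abel
  rw [hE, ← hY, hYt]
  have hEt : ((1 - P * A) * Y * (1 - A * P))ᵀ = (1 - P * A) * Y * (1 - A * P) := by
    simp [transpose_mul, hYt, hAt, hPt, Matrix.mul_assoc]
  rw [hEt]
  obtain ⟨G, hG⟩ : ∃ G, G = A - A * P * A := ⟨_, rfl⟩
  have hG1 : (1 - A * P) * A * (1 - P * A) = G := by
    have : (1 - A * P) * A * (1 - P * A) = A - A * P * A - A * P * A + A * (P * A * P) * A := by
      noncomm_ring
    rw [this, hPAP, hG]; abel
  have hGp : G.PosSemidef := by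
    have := aux_conj hA.posSemidef (1 - A * P)
    rw [← hG1]
    simpa [transpose_mul, hAt, hPt] using this
  have hKp : (A * P * A).PosSemidef := by
    have := aux_conj hP A
    rwa [hAt] at this
  have hYG : (Y * G * Y).PosSemidef := by
    have := aux_conj hGp Y
    rwa [hYt] at this
  have h0 := aux_trace hYG hKp
  have h1 : ((1 - P * A) * Y * (1 - A * P) * A * ((1 - P * A) * Y * (1 - A * P)) * A).trace
      = (Y * G * Y * G).trace := by
    rw [← hG1]
    have : (1 - P * A) * Y * (1 - A * P) * A * ((1 - P * A) * Y * (1 - A * P)) * A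
      = (1 - P * A) * (Y * (1 - A * P) * A * (1 - P * A) * Y * (1 - A * P) * A) := by
      simp only [Matrix.mul_assoc]
    rw [this, Matrix.trace_mul_comm]
    simp only [Matrix.mul_assoc]
  have h2 : Y * G * Y * G = Y * A * Y * A - Y * (A * P * A * Y * A) - Y * G * Y * (A * P * A) := by
    rw [hG]; noncomm_ring
  have h3 : (Y * (A * P * A * Y * A)).trace = (P * (A * Y * A * Y * A)).trace := by
    have : Y * (A * P * A * Y * A) = (Y * A) * (P * (A * Y * A)) := by
      simp only [Matrix.mul_assoc]
    rw [this, Matrix.trace_mul_comm]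
    simp only [Matrix.mul_assoc]
  rw [h1, h2, trace_sub, trace_sub, h3]
  linarith

theorem stmt18 {n r : ℕ} (hn : 0 < n) (A L : Matrix (Fin n) (Fin n) ℝ)
    (hA : A.PosDef) (hL : IsUnit L.det)
    (C : Fin r → Finset (Fin n))
    (hne : ∀ i, (C i).Nonempty)
    (hdis : ∀ i j, i ≠ j → Disjoint (C i) (C j))
    (hcover : ∀ x : Fin n, ∃ i, x ∈ C i)
    (hH : (Lᵀ * A * L).IsHermitian) :
    let X := L * Lᵀ
    -- `S_i` is the column submatrix of `L` with columns indexed by `C i`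
    let Ssub : (i : Fin r) → Matrix (Fin n) (C i) ℝ :=
      fun i => Matrix.of fun x j => L x j.1
    let P : (i : Fin r) → Matrix (Fin n) (Fin n) ℝ :=
      fun i => Ssub i * ((Ssub i)ᵀ * A * Ssub i)⁻¹ * (Ssub i)ᵀ
    let Xp : (i : Fin r) → Matrix (Fin n) (Fin n) ℝ :=
      fun i => P i + (1 - P i * A) * X * (1 - A * P i)
    let p : Fin r → ℝ := fun i => ((Ssub i)ᵀ * A * Ssub i).trace / (Lᵀ * A * L).trace
    ∑ i, p i * ((Xp i - A⁻¹)ᵀ * A * (Xp i - A⁻¹) * A).trace ≤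
      (1 - (⨅ j, hH.eigenvalues j) / (Lᵀ * A * L).trace) *
        ((X - A⁻¹)ᵀ * A * (X - A⁻¹) * A).trace := by
  intro X Ssub P Xp p
  have hLu : IsUnit L := (Matrix.isUnit_iff_isUnit_det L).2 hL
  haveI : Nonempty (Fin n) := ⟨⟨0, hn⟩⟩
  have hAt : Aᵀ = A := by simpa using hA.1.eq
  have hAi : (A⁻¹)ᵀ = A⁻¹ := by rw [transpose_nonsing_inv, hAt]
  have hu : IsUnit A.det := (Matrix.isUnit_iff_isUnit_det A).1 hA.isUnit
  have hAA : A * A⁻¹ = 1 := mul_nonsing_inv A hu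
  have hAA' : A⁻¹ * A = 1 := nonsing_inv_mul A hu
  have hXt : Xᵀ = X := by simp [X]
  have hB : (Lᵀ * A * L).PosDef := by
    have := hA.conjTranspose_mul_mul_same (B := L) (mulVec_injective_of_isUnit hLu)
    simpa using this
  have hT : 0 < (Lᵀ * A * L).trace := hB.trace_pos
  have hsub : ∀ i, (Ssub i)ᵀ * A * Ssub i =
      (Lᵀ * A * L).submatrix (Subtype.val : C i → Fin n) Subtype.val := by
    intro i
    ext a b
    simp [Ssub, Matrix.mul_apply]
  have hBi : ∀ i, ((Ssub i)ᵀ * A * Ssub i).PosDef := by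
    intro i
    rw [hsub]
    exact hB.submatrix Subtype.val_injective
  have hti : ∀ i, 0 ≤ ((Ssub i)ᵀ * A * Ssub i).trace := fun i => (hBi i).posSemidef.trace_nonneg
  have hp : ∀ i, 0 ≤ p i := fun i => div_nonneg (hti i) hT.le
  have hPp : ∀ i, (P i).PosSemidef := fun i => aux_conj (hBi i).inv.posSemidef (Ssub i)
  have hPAP : ∀ i, P i * A * P i = P i := by
    intro i
    have hui : IsUnit ((Ssub i)ᵀ * A * Ssub i).det :=
      (Matrix.isUnit_iff_isUnit_det _).1 (hBi i).isUnit
    calc P i * A * P i = Ssub i * (((Ssub i)ᵀ * A * Ssub i)⁻¹ * ((Ssub i)ᵀ * A * Ssub i)) *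
          ((Ssub i)ᵀ * A * Ssub i)⁻¹ * (Ssub i)ᵀ := by
          simp only [P, Matrix.mul_assoc]
      _ = P i := by rw [nonsing_inv_mul _ hui, Matrix.mul_one]
  have key := fun i => aux_step hA hXt (hPp i) (hPAP i)
  obtain ⟨Y, hY⟩ : ∃ Y, Y = X - A⁻¹ := ⟨_, rfl⟩
  have hYt : Yᵀ = Y := by rw [hY, transpose_sub, hXt, hAi]
  simp only [← hY, hYt] at key ⊢
  obtain ⟨K, hK⟩ : ∃ K, K = A * Y * A * Y * A := ⟨_, rfl⟩
  simp only [← hK] at key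
  have hKp : K.PosSemidef := by
    have := aux_conj hA.posSemidef (A * Y)
    rw [hK]
    simpa [transpose_mul, hAt, hYt, Matrix.mul_assoc] using this
  -- sum over the partition
  have hpart : ∀ f : Fin n → ℝ, ∑ i, ∑ x : C i, f x = ∑ x, f x := by
    intro f
    have h1 : (Finset.univ : Finset (Fin n)) = Finset.univ.biUnion C := by
      ext x; simpa using hcover x
    rw [h1, Finset.sum_biUnion (fun i _ j _ h => hdis i j h)]
    exact Finset.sum_congr rfl fun i _ => Finset.sum_coe_sort (C i) f
  have hpsum : ∑ i, p i = 1 := by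
    simp only [p]
    rw [← Finset.sum_div, div_eq_one_iff_eq hT.ne']
    simp only [hsub]
    exact hpart fun x => (Lᵀ * A * L) x x
  have hSS : ∑ i, Ssub i * (Ssub i)ᵀ = X := by
    ext a b
    rw [Matrix.sum_apply]
    simp only [Matrix.mul_apply, X, Ssub, Matrix.of_apply, transpose_apply]
    exact hpart fun x => L a x * L b x
  have hlow : ∀ i, (Ssub i * (Ssub i)ᵀ * K).trace / (Lᵀ * A * L).trace
      ≤ p i * (P i * K).trace := by
    intro i
    have h := aux_trace (aux_conj (aux_inv (hBi i)) (Ssub i)) hKp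
    have e : Ssub i * (((Ssub i)ᵀ * A * Ssub i).trace • ((Ssub i)ᵀ * A * Ssub i)⁻¹ - 1) *
        (Ssub i)ᵀ * K = ((Ssub i)ᵀ * A * Ssub i).trace • (P i * K) - Ssub i * (Ssub i)ᵀ * K := by
      simp [Matrix.mul_sub, Matrix.sub_mul, P]
    rw [e, trace_sub, trace_smul, smul_eq_mul] at h
    simp only [p]
    rw [div_mul_eq_mul_div]
    exact div_le_div_of_nonneg_right (by linarith) hT.le
  have hsum : (X * K).trace / (Lᵀ * A * L).trace ≤ ∑ i, p i * (P i * K).trace := by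
    refine le_trans (le_of_eq ?_) (Finset.sum_le_sum fun i _ => hlow i)
    rw [← Finset.sum_div, ← trace_sum, ← Finset.sum_mul, hSS]
  -- smallest eigenvalue
  have hmin : (⨅ j, hH.eigenvalues j) * (Y * A * Y * A).trace ≤ (X * K).trace := by
    obtain ⟨N, hN⟩ : ∃ N, N = Lᵀ * A * L - 1 := ⟨_, rfl⟩
    have hNt : Nᵀ = N := by
      rw [hN]; simp [transpose_mul, hAt, Matrix.mul_assoc]
    have hYAL : Y * A * L = L * N := by
      rw [hY, hN, Matrix.sub_mul, hAA']
      simp [X, Matrix.mul_sub, Matrix.sub_mul, Matrix.mul_assoc]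
    have hLL : L * L⁻¹ = 1 := mul_nonsing_inv L hL
    have hLL' : L⁻¹ * L = 1 := nonsing_inv_mul L hL
    have hYA : Y * A = L * N * L⁻¹ := by
      rw [← hYAL, Matrix.mul_assoc, hLL, Matrix.mul_one]
    have e1 : (Y * A * Y * A).trace = (N * N).trace := by
      have : Y * A * Y * A = L * (N * (L⁻¹ * L) * N * L⁻¹) := by
        rw [Matrix.mul_assoc (Y * A) Y A, hYA]
        simp only [Matrix.mul_assoc]
      rw [this, hLL', Matrix.trace_mul_comm, Matrix.mul_one, Matrix.mul_assoc, hLL',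
        Matrix.mul_one]
    have e2 : (X * K).trace = (N * (Lᵀ * A * L) * Nᵀ).trace := by
      have : X * K = L * (Lᵀ * A * (Y * A) * (Y * A)) := by
        simp only [X, hK, Matrix.mul_assoc]
      rw [this, Matrix.trace_mul_comm]
      have : Lᵀ * A * (Y * A) * (Y * A) * L = (Lᵀ * A) * ((Y * A) * (Y * A * L)) := by
        simp only [Matrix.mul_assoc]
      rw [this, hYAL, ← Matrix.mul_assoc (Y * A), hYAL, hNt, Matrix.mul_assoc N,
        Matrix.trace_mul_comm N]
      simp only [Matrix.mul_assoc]
    have h := (aux_conj (aux_min hH) N).trace_nonneg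
    rw [e1, e2]
    have e3 : N * (Lᵀ * A * L - (⨅ j, hH.eigenvalues j) • (1 : Matrix (Fin n) (Fin n) ℝ)) * Nᵀ
        = N * (Lᵀ * A * L) * Nᵀ - (⨅ j, hH.eigenvalues j) • (N * N) := by
      rw [Matrix.mul_sub, Matrix.sub_mul, hNt]; simp
    rw [e3, trace_sub, trace_smul, smul_eq_mul] at h
    linarith
  calc _ ≤ ∑ i, p i * ((Y * A * Y * A).trace - (P i * K).trace) :=
        Finset.sum_le_sum fun i _ => mul_le_mul_of_nonneg_left (key i) (hp i)
    _ = (Y * A * Y * A).trace - ∑ i, p i * (P i * K).trace := by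
        simp only [mul_sub]
        rw [Finset.sum_sub_distrib, ← Finset.sum_mul, hpsum, one_mul]
    _ ≤ (Y * A * Y * A).trace - (X * K).trace / (Lᵀ * A * L).trace := by linarith
    _ ≤ (Y * A * Y * A).trace
        - (⨅ j, hH.eigenvalues j) * (Y * A * Y * A).trace / (Lᵀ * A * L).trace := by
        have := div_le_div_of_nonneg_right hmin hT.le
        linarith
    _ = _ := by ring
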